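/- arXiv:2412.03444 — 2 statements merged into one kernel-verified Lean document; each statement's English description precedes it below -/
import Mathlib

section
/- Let ρ and σ be positive definite d×d density matrices, let α ∈ (0,1) and z ∈ (0,∞). Then the maximum of F_{α,z}(ρ, UσU*) over all d×d unitary matrices U equals F_α^C(λ↓(ρ), λ↓(σ)), and this maximum is attained by some unitary U. -/
open Matrix
open scoped ComplexOrder

/-- Real power of a (Hermitian) matrix via functional calculus on eigenvalues,
with `(0:ℝ) ^ t = 0` for `t ≠ 0`. Returns `0` on non-Hermitian input. -/
noncomputable def mpow {d : ℕ} (A : Matrix (Fin d) (Fin d) ℂ) (t : ℝ) :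
    Matrix (Fin d) (Fin d) ℂ :=
  if hA : A.IsHermitian then
    (hA.eigenvectorUnitary : Matrix (Fin d) (Fin d) ℂ) *
      Matrix.diagonal (fun i => ((hA.eigenvalues i ^ t : ℝ) : ℂ)) *
      (star (hA.eigenvectorUnitary : Matrix (Fin d) (Fin d) ℂ))
  else 0

/-- The quantum α-z-fidelity
`F_{α,z}(ρ,σ) = (Tr[(σ^{(1-α)/(2z)} ρ^{α/z} σ^{(1-α)/(2z)})^z])^{1/α}`. -/
noncomputable def Faz {d : ℕ} (ρ σ : Matrix (Fin d) (Fin d) ℂ) (α z : ℝ) : ℝ :=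
  ((mpow (mpow σ ((1 - α) / (2 * z)) * mpow ρ (α / z) * mpow σ ((1 - α) / (2 * z))) z).trace.re)
    ^ (1 / α)

/-- The classical α-fidelity `F_α^C(p,q) = (Σ_i p_i^α q_i^{1-α})^{1/α}`. -/
noncomputable def FazC {d : ℕ} (p q : Fin d → ℝ) (α : ℝ) : ℝ :=
  (∑ i, p i ^ α * q i ^ (1 - α)) ^ (1 / α)

/-- The vector `p` rearranged in increasing order. -/
noncomputable def sortUp {d : ℕ} (p : Fin d → ℝ) : Fin d → ℝ :=
  p ∘ Tuple.sort p

/-- The vector `p` rearranged in decreasing order. -/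
noncomputable def sortDown {d : ℕ} (p : Fin d → ℝ) : Fin d → ℝ :=
  fun i => sortUp p i.rev

/-- `λ↑(A)`: the eigenvalues of a Hermitian matrix in increasing order. -/
noncomputable def eigUp {d : ℕ} {A : Matrix (Fin d) (Fin d) ℂ} (hA : A.IsHermitian) :
    Fin d → ℝ := sortUp hA.eigenvalues

/-- `λ↓(A)`: the eigenvalues of a Hermitian matrix in decreasing order. -/
noncomputable def eigDown {d : ℕ} {A : Matrix (Fin d) (Fin d) ℂ} (hA : A.IsHermitian) :
    Fin d → ℝ := sortDown hA.eigenvalues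

/-!
If `ρ` and `UσU*` are diagonalized by the same basis with eigenvalues in the same order, the quantum
fidelity is the classical one, which settles attainment. For the upper bound put `A = ρ^{α/z}` and
`B = (UσU*)^{(1-α)/(2z)}`. Compress `B* A B` to its top `k` eigenvectors: the determinant of the
compression is the product of the `k` largest eigenvalues. Expanding `det (Y* diag(a) Y)` as a sum
over the principal minors of `Y Y*` (Cauchy–Binet), each weighted by a product of `k` entries of
`a`, bounds it by `a₁ ⋯ aₖ det (Y* Y)`. Using this once for `A` and once for `B* B` gives Horn's
weak log-majorization of `λ↓(B* A B)` by `λ↓(A) λ↓(B* B)`. Weak log-majorization survives the power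
`z` and implies the inequality between sums, by Abel summation and `x log (y / x) ≤ y - x`.
-/

section Determinants

variable {m n R : Type*} [Fintype m] [Fintype n] [DecidableEq m] [DecidableEq n] [CommRing R]

open Polynomial in
lemma det_mul_eq_sum_minors (A : Matrix m n R) (B : Matrix n m R) :
    (A * B).det = ∑ s ∈ Finset.univ.powersetCard (Fintype.card m),
      ((B * A).submatrix (Subtype.val : s → n) Subtype.val).det := by
  have hcomm : det (1 + (X : R[X]) • (A * B).map C) = det (1 + (X : R[X]) • (B * A).map C) := by
    rw [Matrix.map_mul, Matrix.map_mul, ← Matrix.smul_mul, det_one_add_mul_comm, Matrix.mul_smul]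
  rw [← coeff_det_one_add_X_smul_eq_sum_minors, ← hcomm, coeff_det_one_add_X_smul_eq_sum_minors,
    ← Finset.card_univ, Finset.powersetCard_self, Finset.sum_singleton]
  exact (det_submatrix_equiv_self (Equiv.subtypeUnivEquiv Finset.mem_univ) (A * B)).symm

lemma det_mul_diagonal_mul_eq_sum_minors (A : Matrix m n R) (a : n → R) (B : Matrix n m R) :
    (A * diagonal a * B).det = ∑ s ∈ Finset.univ.powersetCard (Fintype.card m),
      (∏ i ∈ s, a i) * ((B * A).submatrix (Subtype.val : s → n) Subtype.val).det := by
  rw [Matrix.mul_assoc, det_mul_eq_sum_minors]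
  refine Finset.sum_congr rfl fun s _ => ?_
  rw [← Finset.prod_coe_sort, ← det_mul_column]
  congr 1
  ext i j
  simp only [Matrix.mul_assoc, submatrix_apply, diagonal_mul, of_apply]

end Determinants

lemma castLE_le_of_strictMono {k d : ℕ} (h : k ≤ d) {f : Fin k → Fin d} (hf : StrictMono f)
    (j : Fin k) : Fin.castLE h j ≤ f j := by
  suffices ∀ (i : ℕ) (hi : i < k), i ≤ f ⟨i, hi⟩ from this j j.2
  intro i
  induction i with
  | zero => exact fun _ => Nat.zero_le _
  | succ i ih => exact fun hi => (ih (Nat.lt_of_succ_lt hi)).trans_lt (hf (Nat.lt_succ_self i))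

lemma prod_le_prod_castLE_of_antitone {R : Type*} [CommSemiring R] [PartialOrder R]
    [IsOrderedRing R] {d k : ℕ} {a : Fin d → R} (ha : Antitone a) (ha0 : ∀ i, 0 ≤ a i)
    (h : k ≤ d) {s : Finset (Fin d)} (hs : s.card = k) :
    ∏ i ∈ s, a i ≤ ∏ j : Fin k, a (Fin.castLE h j) := by
  calc ∏ i ∈ s, a i = ∏ j : Fin k, a (s.orderEmbOfFin hs j) := by
        conv_lhs => rw [← s.map_orderEmbOfFin_univ hs, Finset.prod_map]
        rfl
    _ ≤ ∏ j : Fin k, a (Fin.castLE h j) :=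
        Finset.prod_le_prod (fun j _ => ha0 _) fun j _ =>
          ha (castLE_le_of_strictMono h (s.orderEmbOfFin hs).strictMono j)

section UnitaryDiagonal

variable {n 𝕜 : Type*} [Fintype n] [DecidableEq n] [RCLike 𝕜]

/-- The Hermitian matrix `U diag(a) U*`, whose eigenvalues are the entries of `a` and whose
eigenvectors are the columns of the unitary `U`. -/
def unitaryDiagonal (U : unitaryGroup n 𝕜) (a : n → ℝ) : Matrix n n 𝕜 :=
  U * diagonal (fun i => (a i : 𝕜)) * star (U : Matrix n n 𝕜)

variable (U V : unitaryGroup n 𝕜) (a b : n → ℝ)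

lemma isHermitian_unitaryDiagonal : (unitaryDiagonal U a).IsHermitian := by
  refine isHermitian_mul_mul_conjTranspose _ (isHermitian_diagonal_iff.2 fun i => ?_)
  exact RCLike.conj_ofReal _

lemma posSemidef_unitaryDiagonal {a : n → ℝ} (ha : ∀ i, 0 ≤ a i) :
    (unitaryDiagonal U a).PosSemidef :=
  (PosSemidef.diagonal fun i => RCLike.ofReal_nonneg.2 (ha i)).mul_mul_conjTranspose_same _

lemma star_mul_unitaryDiagonal : star (U : Matrix n n 𝕜) * unitaryDiagonal U a =
    diagonal (fun i => (a i : 𝕜)) * star (U : Matrix n n 𝕜) := by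
  rw [unitaryDiagonal, ← Matrix.mul_assoc, ← Matrix.mul_assoc, UnitaryGroup.star_mul_self,
    Matrix.one_mul]

lemma unitaryDiagonal_mul_coe : unitaryDiagonal U a * (U : Matrix n n 𝕜) =
    (U : Matrix n n 𝕜) * diagonal (fun i => (a i : 𝕜)) := by
  rw [unitaryDiagonal, Matrix.mul_assoc, UnitaryGroup.star_mul_self, Matrix.mul_one]

lemma mul_unitaryDiagonal_mul_star :
    (U : Matrix n n 𝕜) * unitaryDiagonal V a * star (U : Matrix n n 𝕜) =
      unitaryDiagonal (U * V) a := by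
  simp only [unitaryDiagonal, UnitaryGroup.mul_val, star_mul, Matrix.mul_assoc]

lemma unitaryDiagonal_mul_unitaryDiagonal :
    unitaryDiagonal U a * unitaryDiagonal U b = unitaryDiagonal U fun i => a i * b i := by
  calc unitaryDiagonal U a * unitaryDiagonal U b
      = U * (diagonal fun i => (a i : 𝕜)) * (star (U : Matrix n n 𝕜) * U) *
          (diagonal fun i => (b i : 𝕜)) * star (U : Matrix n n 𝕜) := by
        simp only [unitaryDiagonal, Matrix.mul_assoc]
    _ = unitaryDiagonal U fun i => a i * b i := by
        simp only [UnitaryGroup.star_mul_self, Matrix.mul_one, Matrix.mul_assoc, unitaryDiagonal,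
          RCLike.ofReal_mul, ← diagonal_mul_diagonal]

lemma trace_unitaryDiagonal : (unitaryDiagonal U a).trace = ((∑ i, a i : ℝ) : 𝕜) := by
  rw [unitaryDiagonal, trace_mul_cycle, UnitaryGroup.star_mul_self, Matrix.one_mul,
    trace_diagonal, RCLike.ofReal_sum]

lemma diagonal_comp_mul_eq_mul_diagonal_comp {a b : n → ℝ} {X : Matrix n n 𝕜}
    (h : diagonal (fun i => (a i : 𝕜)) * X = X * diagonal (fun i => (b i : 𝕜))) (f : ℝ → ℝ) :
    diagonal (fun i => (f (a i) : 𝕜)) * X = X * diagonal (fun i => (f (b i) : 𝕜)) := by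
  ext i j
  have hij := congrFun (congrFun h i) j
  rw [diagonal_mul, mul_diagonal, mul_comm] at hij ⊢
  obtain hX | hX := eq_or_ne (X i j) 0
  · rw [hX, zero_mul, zero_mul]
  · rw [RCLike.ofReal_inj.1 (mul_left_cancel₀ hX hij)]

variable {U V a b} in
lemma unitaryDiagonal_comp_congr (h : unitaryDiagonal U a = unitaryDiagonal V b) (f : ℝ → ℝ) :
    unitaryDiagonal U (fun i => f (a i)) = unitaryDiagonal V fun i => f (b i) := by
  have hX : diagonal (fun i => (a i : 𝕜)) * (star (U : Matrix n n 𝕜) * (V : Matrix n n 𝕜)) =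
      star (U : Matrix n n 𝕜) * (V : Matrix n n 𝕜) * diagonal (fun i => (b i : 𝕜)) := by
    rw [← Matrix.mul_assoc, ← star_mul_unitaryDiagonal, h, Matrix.mul_assoc,
      unitaryDiagonal_mul_coe, Matrix.mul_assoc]
  have hU : (U : Matrix n n 𝕜) * star (U : Matrix n n 𝕜) = 1 := Unitary.mul_star_self_of_mem U.2
  have hV : (V : Matrix n n 𝕜) * star (V : Matrix n n 𝕜) = 1 := Unitary.mul_star_self_of_mem V.2
  calc unitaryDiagonal U (fun i => f (a i))
      = U * (diagonal (fun i => (f (a i) : 𝕜)) * (star (U : Matrix n n 𝕜) * V)) *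
          star (V : Matrix n n 𝕜) := by
        simp only [unitaryDiagonal, Matrix.mul_assoc, hV, Matrix.mul_one]
    _ = U * (star (U : Matrix n n 𝕜) * V * diagonal (fun i => (f (b i) : 𝕜))) *
          star (V : Matrix n n 𝕜) := by
        rw [diagonal_comp_mul_eq_mul_diagonal_comp hX f]
    _ = unitaryDiagonal V fun i => f (b i) := by
        simp only [← Matrix.mul_assoc, hU, Matrix.one_mul, unitaryDiagonal]

lemma exists_unitaryDiagonal_comp_perm (e : Equiv.Perm n) :
    ∃ V : unitaryGroup n 𝕜, unitaryDiagonal U a = unitaryDiagonal V (a ∘ e) := by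
  have hV : (U : Matrix n n 𝕜).submatrix id e ∈ unitaryGroup n 𝕜 := by
    rw [mem_unitaryGroup_iff, star_eq_conjTranspose, conjTranspose_submatrix,
      submatrix_mul_equiv, submatrix_id_id]
    exact Unitary.mul_star_self_of_mem U.2
  refine ⟨⟨_, hV⟩, ?_⟩
  have hdiag : diagonal (fun i => ((a ∘ e) i : 𝕜)) =
      (diagonal fun i => (a i : 𝕜)).submatrix e e :=
    (submatrix_diagonal_equiv (fun i => (a i : 𝕜)) e).symm
  rw [unitaryDiagonal, unitaryDiagonal, hdiag, star_eq_conjTranspose, star_eq_conjTranspose,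
    conjTranspose_submatrix, submatrix_mul_equiv, submatrix_mul_equiv, submatrix_id_id]

end UnitaryDiagonal

section PrefixDeterminants

variable {d k : ℕ} {𝕜 : Type*} [RCLike 𝕜]

lemma det_conjTranspose_mul_diagonal_mul_le {a : Fin d → ℝ} (ha : Antitone a)
    (ha0 : ∀ i, 0 ≤ a i) (h : k ≤ d) (Y : Matrix (Fin d) (Fin k) 𝕜) :
    (Yᴴ * diagonal (fun i => (a i : 𝕜)) * Y).det ≤
      ((∏ j : Fin k, a (Fin.castLE h j) : ℝ) : 𝕜) * (Yᴴ * Y).det := by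
  rw [det_mul_diagonal_mul_eq_sum_minors, det_mul_eq_sum_minors, Finset.mul_sum]
  refine Finset.sum_le_sum fun s hs => mul_le_mul_of_nonneg_right ?_ ?_
  · rw [← RCLike.ofReal_prod, RCLike.ofReal_le_ofReal]
    exact prod_le_prod_castLE_of_antitone ha ha0 h
      ((Finset.mem_powersetCard.1 hs).2.trans (Fintype.card_fin k))
  · exact ((posSemidef_self_mul_conjTranspose Y).submatrix _).det_nonneg

lemma det_conjTranspose_mul_unitaryDiagonal_mul_le (U : unitaryGroup (Fin d) 𝕜) {a : Fin d → ℝ}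
    (ha : Antitone a) (ha0 : ∀ i, 0 ≤ a i) (h : k ≤ d) (Z : Matrix (Fin d) (Fin k) 𝕜) :
    (Zᴴ * unitaryDiagonal U a * Z).det ≤
      ((∏ j : Fin k, a (Fin.castLE h j) : ℝ) : 𝕜) * (Zᴴ * Z).det := by
  let Y : Matrix (Fin d) (Fin k) 𝕜 := star (U : Matrix (Fin d) (Fin d) 𝕜) * Z
  have hYH : Yᴴ = Zᴴ * (U : Matrix (Fin d) (Fin d) 𝕜) := by
    rw [conjTranspose_mul, star_eq_conjTranspose, conjTranspose_conjTranspose]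
  have hYY : Yᴴ * Y = Zᴴ * Z := by
    rw [hYH, Matrix.mul_assoc, ← Matrix.mul_assoc (U : Matrix (Fin d) (Fin d) 𝕜),
      Unitary.mul_star_self_of_mem U.2, Matrix.one_mul]
  have hYaY : Yᴴ * diagonal (fun i => (a i : 𝕜)) * Y = Zᴴ * unitaryDiagonal U a * Z := by
    simp only [hYH, Y, unitaryDiagonal, Matrix.mul_assoc]
  simpa only [hYY, hYaY] using det_conjTranspose_mul_diagonal_mul_le ha ha0 h Y

/-- Weak log-majorization `x ≺_wlog y`: every product of an initial segment of `x` is at most the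
corresponding product of `y`. Neither vector is sorted first, so this is the usual notion for
vectors listed in decreasing order. -/
def WeakLogMaj (x y : Fin d → ℝ) : Prop :=
  ∀ (k : ℕ) (h : k ≤ d), ∏ j : Fin k, x (Fin.castLE h j) ≤ ∏ j : Fin k, y (Fin.castLE h j)

lemma weakLogMaj_of_conjTranspose_mul_mul (U V W : unitaryGroup (Fin d) 𝕜) {a b c : Fin d → ℝ}
    (ha : Antitone a) (ha0 : ∀ i, 0 ≤ a i) (hb : Antitone b) (hb0 : ∀ i, 0 ≤ b i)
    {B : Matrix (Fin d) (Fin d) 𝕜} (hB : Bᴴ * B = unitaryDiagonal V b)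
    (hBAB : Bᴴ * unitaryDiagonal U a * B = unitaryDiagonal W c) :
    WeakLogMaj c fun i => a i * b i := by
  intro k h
  let Z : Matrix (Fin d) (Fin k) 𝕜 := (W : Matrix (Fin d) (Fin d) 𝕜).submatrix id (Fin.castLE h)
  have hZ (N : Matrix (Fin d) (Fin d) 𝕜) : Zᴴ * N * Z =
      (star (W : Matrix (Fin d) (Fin d) 𝕜) * N * W).submatrix (Fin.castLE h) (Fin.castLE h) := rfl
  have hZZ : (Zᴴ * Z).det = 1 := by
    have hone := hZ 1
    rw [Matrix.mul_one, Matrix.mul_one, UnitaryGroup.star_mul_self,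
      submatrix_one _ (Fin.castLE_injective h)] at hone
    rw [hone, det_one]
  have hZc : (Zᴴ * unitaryDiagonal W c * Z).det = ((∏ j : Fin k, c (Fin.castLE h j) : ℝ) : 𝕜) := by
    rw [hZ, star_mul_unitaryDiagonal, Matrix.mul_assoc, UnitaryGroup.star_mul_self,
      Matrix.mul_one, submatrix_diagonal _ _ (Fin.castLE_injective h),
      det_diagonal, RCLike.ofReal_prod]
    rfl
  rw [← RCLike.ofReal_le_ofReal (K := 𝕜), Finset.prod_mul_distrib, RCLike.ofReal_mul, ← hZc, ← hBAB]
  calc (Zᴴ * (Bᴴ * unitaryDiagonal U a * B) * Z).det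
      = ((B * Z)ᴴ * unitaryDiagonal U a * (B * Z)).det := by
        simp only [conjTranspose_mul, Matrix.mul_assoc]
    _ ≤ ((∏ j : Fin k, a (Fin.castLE h j) : ℝ) : 𝕜) * (Zᴴ * unitaryDiagonal V b * Z).det := by
        rw [← hB]
        simpa only [conjTranspose_mul, Matrix.mul_assoc] using
          det_conjTranspose_mul_unitaryDiagonal_mul_le U ha ha0 h (B * Z)
    _ ≤ ((∏ j : Fin k, a (Fin.castLE h j) : ℝ) : 𝕜) *
          ((∏ j : Fin k, b (Fin.castLE h j) : ℝ) : 𝕜) := by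
        refine mul_le_mul_of_nonneg_left ?_
          (RCLike.ofReal_nonneg.2 (Finset.prod_nonneg fun j _ => ha0 _))
        simpa only [hZZ, mul_one] using
          det_conjTranspose_mul_unitaryDiagonal_mul_le V hb hb0 h Z

end PrefixDeterminants

section WeakLogMajorization

lemma sum_mul_nonneg_of_antitone {R : Type*} [CommRing R] [LinearOrder R] [IsStrictOrderedRing R] :
    ∀ {d : ℕ} {w δ : Fin d → R}, Antitone w → (∀ i, 0 ≤ w i) →
      (∀ k (h : k ≤ d), 0 ≤ ∑ j : Fin k, δ (Fin.castLE h j)) → 0 ≤ ∑ i, w i * δ i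
  | 0, _, _, _, _, _ => by simp
  | d + 1, w, δ, hw, hw0, hδ => by
    have hinit : 0 ≤ ∑ i : Fin d, (w i.castSucc - w (Fin.last d)) * δ i.castSucc :=
      sum_mul_nonneg_of_antitone
        (fun i j hij => sub_le_sub_right (hw (Fin.castSucc_le_castSucc_iff.2 hij)) _)
        (fun i => sub_nonneg.2 (hw (Fin.le_last _))) fun k h => hδ k (h.trans d.le_succ)
    have hlast : 0 ≤ w (Fin.last d) * ∑ i, δ i := mul_nonneg (hw0 _) (hδ (d + 1) le_rfl)
    calc 0 ≤ _ := add_nonneg hinit hlast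
      _ = ∑ i, w i * δ i := by
        simp only [Fin.sum_univ_castSucc, sub_mul, Finset.sum_sub_distrib, ← Finset.mul_sum]
        ring

variable {d : ℕ} {x y : Fin d → ℝ}

lemma WeakLogMaj.rpow (h : WeakLogMaj x y) (hx : ∀ i, 0 ≤ x i) (hy : ∀ i, 0 ≤ y i) {t : ℝ}
    (ht : 0 ≤ t) : WeakLogMaj (fun i => x i ^ t) fun i => y i ^ t := by
  intro k hk
  rw [Real.finsetProd_rpow _ _ fun j _ => hx _, Real.finsetProd_rpow _ _ fun j _ => hy _]
  exact Real.rpow_le_rpow (Finset.prod_nonneg fun j _ => hx _) (h k hk) ht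

lemma WeakLogMaj.sum_le_of_pos (h : WeakLogMaj x y) (hx : Antitone x) (hx0 : ∀ i, 0 < x i)
    (hy0 : ∀ i, 0 < y i) : ∑ i, x i ≤ ∑ i, y i := by
  have hlog : 0 ≤ ∑ i, x i * (Real.log (y i) - Real.log (x i)) := by
    refine sum_mul_nonneg_of_antitone hx (fun i => (hx0 i).le) fun k hk => ?_
    rw [Finset.sum_sub_distrib, ← Real.log_prod fun j _ => (hx0 _).ne',
      ← Real.log_prod fun j _ => (hy0 _).ne', sub_nonneg]
    exact Real.log_le_log (Finset.prod_pos fun j _ => hx0 _) (h k hk)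
  have htangent (i : Fin d) : x i * (Real.log (y i) - Real.log (x i)) ≤ y i - x i := by
    rw [← Real.log_div (hy0 i).ne' (hx0 i).ne']
    calc x i * Real.log (y i / x i) ≤ x i * (y i / x i - 1) :=
          mul_le_mul_of_nonneg_left
            (Real.log_le_sub_one_of_pos (div_pos (hy0 i) (hx0 i))) (hx0 i).le
      _ = y i - x i := by field_simp [(hx0 i).ne']
  rw [← sub_nonneg, ← Finset.sum_sub_distrib]
  exact hlog.trans (Finset.sum_le_sum fun i _ => htangent i)

lemma WeakLogMaj.sum_le : ∀ {d : ℕ} {x y : Fin d → ℝ}, WeakLogMaj x y → Antitone x →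
    (∀ i, 0 ≤ x i) → (∀ i, 0 ≤ y i) → ∑ i, x i ≤ ∑ i, y i
  | 0, _, _, _, _, _, _ => by simp
  | d + 1, x, y, h, hx, hx0, hy0 => by
    obtain hlast | hlast := (hx0 (Fin.last d)).eq_or_lt
    · rw [Fin.sum_univ_castSucc, Fin.sum_univ_castSucc, ← hlast]
      exact add_le_add
        (WeakLogMaj.sum_le (fun k hk => h k (hk.trans d.le_succ))
          (hx.comp_monotone Fin.strictMono_castSucc.monotone) (fun i => hx0 _) fun i => hy0 _)
        (hy0 _)
    · have hxpos (i : Fin (d + 1)) : 0 < x i := hlast.trans_le (hx (Fin.le_last i))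
      have hprod : 0 < ∏ i, y i :=
        (Finset.prod_pos fun i _ => hxpos i).trans_le (h (d + 1) le_rfl)
      refine h.sum_le_of_pos hx hxpos fun i => (hy0 i).lt_of_ne' fun hi => hprod.ne' ?_
      exact Finset.prod_eq_zero (Finset.mem_univ i) hi

end WeakLogMajorization

section Eigenvalues

variable {d : ℕ} {A : Matrix (Fin d) (Fin d) ℂ}

lemma eigDown_antitone (hA : A.IsHermitian) : Antitone (eigDown hA) :=
  fun _ _ hij => Tuple.monotone_sort hA.eigenvalues (Fin.rev_le_rev.2 hij)

lemma eigDown_nonneg (hA : A.PosSemidef) (i : Fin d) : 0 ≤ eigDown hA.1 i :=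
  hA.eigenvalues_nonneg _

lemma eq_unitaryDiagonal_eigenvalues (hA : A.IsHermitian) :
    A = unitaryDiagonal hA.eigenvectorUnitary hA.eigenvalues := by
  have h := hA.spectral_theorem
  rw [Unitary.conjStarAlgAut_apply] at h
  exact h

lemma exists_eq_unitaryDiagonal_eigDown (hA : A.IsHermitian) :
    ∃ U : unitaryGroup (Fin d) ℂ, A = unitaryDiagonal U (eigDown hA) := by
  obtain ⟨U, hU⟩ := exists_unitaryDiagonal_comp_perm hA.eigenvectorUnitary hA.eigenvalues
    (Fin.revPerm.trans (Tuple.sort hA.eigenvalues))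
  exact ⟨U, (eq_unitaryDiagonal_eigenvalues hA).trans hU⟩

lemma mpow_unitaryDiagonal (U : unitaryGroup (Fin d) ℂ) (a : Fin d → ℝ) (t : ℝ) :
    mpow (unitaryDiagonal U a) t = unitaryDiagonal U fun i => a i ^ t := by
  have hA := isHermitian_unitaryDiagonal U a
  rw [mpow, dif_pos hA]
  exact unitaryDiagonal_comp_congr (eq_unitaryDiagonal_eigenvalues hA).symm (· ^ t)

end Eigenvalues

section Fidelity

variable {d : ℕ} (U V : unitaryGroup (Fin d) ℂ) {p q : Fin d → ℝ}

lemma trace_mpow_unitaryDiagonal_re (a : Fin d → ℝ) (t : ℝ) :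
    (mpow (unitaryDiagonal U a) t).trace.re = ∑ i, a i ^ t := by
  rw [mpow_unitaryDiagonal, trace_unitaryDiagonal]
  exact Complex.ofReal_re _

lemma trace_mpow_re_nonneg {A : Matrix (Fin d) (Fin d) ℂ} (hA : A.PosSemidef) (t : ℝ) :
    0 ≤ (mpow A t).trace.re := by
  obtain ⟨U, hU⟩ := exists_eq_unitaryDiagonal_eigDown hA.1
  have ha0 := eigDown_nonneg hA
  generalize eigDown hA.1 = a at hU ha0
  rw [hU, trace_mpow_unitaryDiagonal_re]
  exact Finset.sum_nonneg fun i _ => Real.rpow_nonneg (ha0 i) t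

lemma trace_mpow_conjTranspose_mul_mul_le {a b : Fin d → ℝ} (ha : Antitone a)
    (ha0 : ∀ i, 0 ≤ a i) (hb : Antitone b) (hb0 : ∀ i, 0 ≤ b i) {B : Matrix (Fin d) (Fin d) ℂ}
    (hB : Bᴴ * B = unitaryDiagonal V b) {t : ℝ} (ht : 0 ≤ t) :
    (mpow (Bᴴ * unitaryDiagonal U a * B) t).trace.re ≤ ∑ i, (a i * b i) ^ t := by
  have hM := (posSemidef_unitaryDiagonal U ha0).conjTranspose_mul_mul_same B
  obtain ⟨W, hW⟩ := exists_eq_unitaryDiagonal_eigDown hM.1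
  have hc := eigDown_antitone hM.1
  have hc0 := eigDown_nonneg hM
  generalize eigDown hM.1 = c at hW hc hc0
  have hmaj : WeakLogMaj c fun i => a i * b i :=
    weakLogMaj_of_conjTranspose_mul_mul U V W ha ha0 hb hb0 hB hW
  have hab0 (i : Fin d) : 0 ≤ a i * b i := mul_nonneg (ha0 i) (hb0 i)
  rw [hW, trace_mpow_unitaryDiagonal_re]
  exact (hmaj.rpow hc0 hab0 ht).sum_le (fun i j hij => Real.rpow_le_rpow (hc0 j) (hc hij) ht)
    (fun i => Real.rpow_nonneg (hc0 i) t) fun i => Real.rpow_nonneg (hab0 i) t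

lemma rpow_div_mul_mul_self_rpow {p q α z : ℝ} (hp : 0 ≤ p) (hq : 0 ≤ q) (hz : z ≠ 0) :
    (p ^ (α / z) * (q ^ ((1 - α) / (2 * z)) * q ^ ((1 - α) / (2 * z)))) ^ z =
      p ^ α * q ^ (1 - α) := by
  rw [← pow_two, ← Real.rpow_mul_natCast hq, Real.mul_rpow (by positivity) (by positivity),
    ← Real.rpow_mul hp, ← Real.rpow_mul hq]
  congr 2 <;> push_cast <;> field_simp

lemma Faz_unitaryDiagonal (hp : ∀ i, 0 ≤ p i) (hq : ∀ i, 0 ≤ q i) (α : ℝ) {z : ℝ} (hz : z ≠ 0) :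
    Faz (unitaryDiagonal U p) (unitaryDiagonal U q) α z = FazC p q α := by
  simp only [Faz, FazC, mpow_unitaryDiagonal, unitaryDiagonal_mul_unitaryDiagonal]
  rw [← mpow_unitaryDiagonal, trace_mpow_unitaryDiagonal_re]
  congr 1
  refine Finset.sum_congr rfl fun i _ => ?_
  rw [← rpow_div_mul_mul_self_rpow (hp i) (hq i) hz]
  ring_nf

lemma Faz_unitaryDiagonal_le (hp : Antitone p) (hp0 : ∀ i, 0 ≤ p i) (hq : Antitone q)
    (hq0 : ∀ i, 0 ≤ q i) {α z : ℝ} (hα0 : 0 ≤ α) (hα1 : α ≤ 1) (hz : 0 < z) :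
    Faz (unitaryDiagonal U p) (unitaryDiagonal V q) α z ≤ FazC p q α := by
  have hs : 0 ≤ (1 - α) / (2 * z) := div_nonneg (sub_nonneg.2 hα1) (by positivity)
  have hB : (unitaryDiagonal V fun i => q i ^ ((1 - α) / (2 * z)))ᴴ =
      unitaryDiagonal V fun i => q i ^ ((1 - α) / (2 * z)) := isHermitian_unitaryDiagonal V _
  have hA0 (i : Fin d) : 0 ≤ p i ^ (α / z) := Real.rpow_nonneg (hp0 i) _
  have htrace := trace_mpow_conjTranspose_mul_mul_le U V
    (fun i j hij => Real.rpow_le_rpow (hp0 j) (hp hij) (by positivity)) hA0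
    (fun i j hij => mul_self_le_mul_self (Real.rpow_nonneg (hq0 j) _)
      (Real.rpow_le_rpow (hq0 j) (hq hij) hs))
    (fun i => mul_self_nonneg _) (by rw [hB, unitaryDiagonal_mul_unitaryDiagonal]) hz.le
  have hM := (posSemidef_unitaryDiagonal U hA0).conjTranspose_mul_mul_same
    (unitaryDiagonal V fun i => q i ^ ((1 - α) / (2 * z)))
  rw [hB] at hM
  simp only [hB, rpow_div_mul_mul_self_rpow (hp0 _) (hq0 _) hz.ne'] at htrace
  rw [Faz, FazC, mpow_unitaryDiagonal, mpow_unitaryDiagonal]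
  exact Real.rpow_le_rpow (trace_mpow_re_nonneg hM z) htrace (by positivity)

end Fidelity

theorem stmt_0_general {d : ℕ} (ρ σ : Matrix (Fin d) (Fin d) ℂ)
    (hρ : ρ.PosSemidef) (hσ : σ.PosSemidef)
    (α z : ℝ) (hα0 : 0 < α) (hα1 : α ≤ 1) (hz : 0 < z) :
    IsGreatest {x : ℝ | ∃ U ∈ Matrix.unitaryGroup (Fin d) ℂ,
        x = Faz ρ (U * σ * star U) α z}
      (FazC (eigDown hρ.1) (eigDown hσ.1) α) := by
  obtain ⟨P, hP⟩ := exists_eq_unitaryDiagonal_eigDown hρ.1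
  obtain ⟨Q, hQ⟩ := exists_eq_unitaryDiagonal_eigDown hσ.1
  have hp := eigDown_antitone hρ.1
  have hq := eigDown_antitone hσ.1
  have hp0 := eigDown_nonneg hρ
  have hq0 := eigDown_nonneg hσ
  generalize eigDown hρ.1 = p at *
  generalize eigDown hσ.1 = q at *
  subst hP hQ
  constructor
  · refine ⟨(P * star Q : unitaryGroup (Fin d) ℂ), (P * star Q).2, ?_⟩
    rw [mul_unitaryDiagonal_mul_star, mul_assoc, Unitary.star_mul_self, mul_one,
      Faz_unitaryDiagonal P hp0 hq0 α hz.ne']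
  · rintro _ ⟨U, hU, rfl⟩
    rw [mul_unitaryDiagonal_mul_star ⟨U, hU⟩]
    exact Faz_unitaryDiagonal_le P _ hp hp0 hq hq0 hα0.le hα1 hz

/-- for positive definite density matrices `ρ, σ`, `α ∈ (0,1)` and `z ∈ (0,∞)`,
the maximum of `F_{α,z}(ρ, UσU*)` over unitaries `U` is `F_α^C(λ↓(ρ), λ↓(σ))`, attained. -/
theorem stmt_0 {d : ℕ} (ρ σ : Matrix (Fin d) (Fin d) ℂ)
    (hρ : ρ.PosDef) (hσ : σ.PosDef) (hρ1 : ρ.trace = 1) (hσ1 : σ.trace = 1)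
    (α z : ℝ) (hα : α ∈ Set.Ioo (0 : ℝ) 1) (hz : 0 < z) :
    IsGreatest {x : ℝ | ∃ U ∈ Matrix.unitaryGroup (Fin d) ℂ,
        x = Faz ρ (U * σ * star U) α z}
      (FazC (eigDown hρ.1) (eigDown hσ.1) α) :=
  stmt_0_general ρ σ hρ.posSemidef hσ.posSemidef α z hα.1 hα.2.le hz
end

section
/- Let ρ and σ be positive definite d×d density matrices, let α ∈ (1,∞) and z ∈ (0,∞). Then the maximum of F_{α,z}(ρ, UσU*) over all d×d unitary matrices U equals F_α^C(λ↓(ρ), λ↑(σ)), and this maximum is attained by some unitary U. -/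
open Matrix
open scoped ComplexOrder

/-!
The matrix `S = σ ^ ((1 - α) / (2z))` and the unitary conjugates `X` of `ρ ^ (α / z)` are positive
definite, and the unitary group is compact, so `X ↦ Tr (S X S) ^ z` attains its maximum over the
conjugates. At a maximizer the trace function, which need not be convex or concave, is bounded from
below by a quadratic function of `X` with the same value and first derivative (a Klein inequality
with remainder). Differentiating this minorant along `X ↦ exp(tK) X exp(-tK)` yields a first-order
condition which, for `K = [X, S (S X S) ^ (z - 1) S]`, says `Tr (K* K) = 0` and so makes `X` commute
with `S`. The functional is then `Tr (S ^ (2z) X ^ z)`, which the trace inequality of von Neumann,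
through the theorem of Birkhoff, bounds by its value at oppositely ordered spectra of `ρ` and `σ`.
-/

section

open Unitary
open scoped MatrixOrder Matrix.Norms.L2Operator

section UnitaryConjugation

variable {n 𝕜 : Type*} [Fintype n] [RCLike 𝕜]

lemma eq_zero_of_re_trace_mul_self_eq_zero {K : Matrix n n 𝕜} (hK : star K = -K)
    (h : RCLike.re (K * K).trace = 0) : K = 0 := by
  have hnonneg := RCLike.nonneg_iff.1 (posSemidef_conjTranspose_mul_self K).trace_nonneg
  refine trace_conjTranspose_mul_self_eq_zero_iff.1 (RCLike.ext ?_ ?_)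
  · rw [← star_eq_conjTranspose, hK, neg_mul, trace_neg, map_neg, h, neg_zero, map_zero]
  · rw [hnonneg.2, map_zero]

lemma posDef_mul_mul_self {S X : Matrix n n 𝕜} (hS : S.PosDef) (hX : X.PosDef) :
    (S * X * S).PosDef := by
  classical
  simpa only [star_eq_conjTranspose, hS.isHermitian.eq] using
    (Matrix.IsUnit.posDef_star_right_conjugate_iff hS.isUnit).2 hX

variable [DecidableEq n]

/-- The unistochastic matrix of a unitary: its entries are the squared moduli of those of `U`. -/
def unistochastic (U : unitaryGroup n 𝕜) : Matrix n n ℝ :=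
  Matrix.of fun i j => ‖(U : Matrix n n 𝕜) i j‖ ^ 2

lemma unistochastic_mem_doublyStochastic (U : unitaryGroup n 𝕜) :
    unistochastic U ∈ doublyStochastic ℝ n := by
  rw [mem_doublyStochastic_iff_sum]
  refine ⟨fun i j => sq_nonneg _, fun i => ?_, fun j => ?_⟩ <;>
    apply RCLike.ofReal_injective (K := 𝕜)
  · simpa [unistochastic, mul_apply, RCLike.mul_conj] using congr_fun₂ (coe_mul_star_self U) i i
  · simpa [unistochastic, mul_apply, RCLike.conj_mul] using congr_fun₂ (coe_star_mul_self U) j j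

lemma dotProduct_mulVec_le_of_mem_doublyStochastic {P : Matrix n n ℝ}
    (hP : P ∈ doublyStochastic ℝ n) {f g : n → ℝ} (hfg : Monovary f g) :
    f ⬝ᵥ P *ᵥ g ≤ f ⬝ᵥ g := by
  let ℓ : Matrix n n ℝ →ₗ[ℝ] ℝ := dotProductBilin ℝ ℝ f ∘ₗ (mulVecBilin ℝ ℝ).flip g
  have hperm : {τ.permMatrix ℝ | τ : Equiv.Perm n} ⊆ {P | ℓ P ≤ f ⬝ᵥ g} := by
    rintro _ ⟨τ, rfl⟩
    simpa [ℓ, permMatrix_mulVec, dotProduct] using hfg.sum_mul_comp_perm_le_sum_mul (σ := τ)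
  rw [← SetLike.mem_coe, doublyStochastic_eq_convexHull_permMatrix] at hP
  exact convexHull_min hperm (convex_halfSpace_le ℓ.isLinear _) hP

/-- The Hermitian matrix `U diag(v) U*` with eigenbasis the columns of `U` and eigenvalues `v`,
as a star homomorphism in `v`. -/
noncomputable def conjDiagonal (U : unitaryGroup n 𝕜) : (n → ℝ) →⋆ₐ[ℝ] Matrix n n 𝕜 where
  toFun v := conjStarAlgAut 𝕜 _ U (diagonal (RCLike.ofReal ∘ v))
  map_one' := by simp [Function.comp_def]
  map_mul' v w := by
    rw [← map_mul, diagonal_mul_diagonal]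
    congr! with i
    simp
  map_zero' := by simp [Function.comp_def]
  map_add' v w := by
    rw [← map_add, diagonal_add]
    congr! with i
    simp
  commutes' r := by
    rw [show diagonal (RCLike.ofReal ∘ algebraMap ℝ (n → ℝ) r) =
      algebraMap 𝕜 (Matrix n n 𝕜) (RCLike.ofReal r) from rfl, AlgHomClass.commutes]
    rfl
  map_star' v := by
    rw [← map_star, star_eq_conjTranspose, diagonal_conjTranspose]
    congr! with i
    exact funext fun i => (RCLike.conj_ofReal (v i)).symm

lemma conjDiagonal_apply (U : unitaryGroup n 𝕜) (v : n → ℝ) :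
    conjDiagonal U v = conjStarAlgAut 𝕜 _ U (diagonal (RCLike.ofReal ∘ v)) := rfl

lemma conjStarAlgAut_conjDiagonal (W U : unitaryGroup n 𝕜) (v : n → ℝ) :
    conjStarAlgAut 𝕜 _ W (conjDiagonal U v) = conjDiagonal (W * U) v := by
  simp only [conjDiagonal_apply, conjStarAlgAut_mul_apply]

lemma isHermitian_conjDiagonal (U : unitaryGroup n 𝕜) (v : n → ℝ) :
    (conjDiagonal U v).IsHermitian :=
  (IsSelfAdjoint.all v).map (conjDiagonal U)

lemma posDef_conjStarAlgAut (U : unitaryGroup n 𝕜) {X : Matrix n n 𝕜} (hX : X.PosDef) :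
    (conjStarAlgAut 𝕜 _ U X).PosDef := by
  rw [conjStarAlgAut_apply]
  exact (Matrix.IsUnit.posDef_star_right_conjugate_iff (Unitary.isUnit_coe (U := U))).2 hX

lemma posDef_conjDiagonal (U : unitaryGroup n 𝕜) {v : n → ℝ} (hv : ∀ i, 0 < v i) :
    (conjDiagonal U v).PosDef :=
  posDef_conjStarAlgAut U (posDef_diagonal_iff.2 fun i => RCLike.ofReal_pos.2 (hv i))

lemma conjDiagonal_eigenvalues {A : Matrix n n 𝕜} (hA : A.IsHermitian) :
    conjDiagonal hA.eigenvectorUnitary hA.eigenvalues = A :=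
  hA.spectral_theorem.symm

lemma spectrum_conjDiagonal (U : unitaryGroup n 𝕜) (v : n → ℝ) :
    spectrum ℝ (conjDiagonal U v) = Set.range v := by
  rw [conjDiagonal_apply, conjStarAlgAut_apply, Unitary.spectrum_star_right_conjugate]
  ext x
  rw [← spectrum.algebraMap_mem_iff 𝕜, spectrum_diagonal]
  simp

lemma cfc_conjDiagonal (U : unitaryGroup n 𝕜) (v : n → ℝ) (f : ℝ → ℝ) :
    cfc f (conjDiagonal U v) = conjDiagonal U (f ∘ v) := by
  obtain ⟨p, hp⟩ : ∃ p : Polynomial ℝ, ∀ i, p.eval (v i) = f (v i) :=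
    (Polynomial.exists_eval_eq_iff v (f ∘ v)).2 fun i j h => congrArg f h
  calc cfc f (conjDiagonal U v) = cfc p.eval (conjDiagonal U v) := by
        refine cfc_congr fun x hx => ?_
        obtain ⟨i, rfl⟩ := spectrum_conjDiagonal U v ▸ hx
        exact (hp i).symm
    _ = conjDiagonal U (p.aeval v) := by
        refine (cfc_polynomial p _ (isHermitian_conjDiagonal U v)).trans ?_
        exact Polynomial.aeval_algHom_apply (conjDiagonal U).toAlgHom v p
    _ = conjDiagonal U (f ∘ v) := by
        congr with i
        rw [Polynomial.aeval_fn_apply]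
        exact hp i

lemma rpow_conjDiagonal (U : unitaryGroup n 𝕜) {v : n → ℝ} (hv : 0 ≤ v) (z : ℝ) :
    conjDiagonal U v ^ z = conjDiagonal U (fun i => v i ^ z) := by
  rw [CFC.rpow_eq_cfc_real (map_nonneg _ hv), cfc_conjDiagonal]
  rfl

lemma conjStarAlgAut_rpow (U : unitaryGroup n 𝕜) {A : Matrix n n 𝕜} (hA : A.PosSemidef) (x : ℝ) :
    conjStarAlgAut 𝕜 _ U A ^ x = conjStarAlgAut 𝕜 _ U (A ^ x) := by
  rw [← conjDiagonal_eigenvalues hA.isHermitian, conjStarAlgAut_conjDiagonal,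
    rpow_conjDiagonal _ hA.eigenvalues_nonneg, rpow_conjDiagonal _ hA.eigenvalues_nonneg,
    conjStarAlgAut_conjDiagonal]

lemma exists_conjDiagonal_comp_eq (U : unitaryGroup n 𝕜) (τ : Equiv.Perm n) :
    ∃ V : unitaryGroup n 𝕜, ∀ v, conjDiagonal V (v ∘ τ) = conjDiagonal U v := by
  have hP : τ⁻¹.permMatrix 𝕜 ∈ unitaryGroup n 𝕜 := by
    rw [mem_unitaryGroup_iff, star_eq_conjTranspose, conjTranspose_permMatrix, ← permMatrix_mul]
    simp
  refine ⟨U * ⟨_, hP⟩, fun v => ?_⟩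
  have h : conjDiagonal ⟨_, hP⟩ (v ∘ τ) = diagonal (RCLike.ofReal ∘ v) := by
    rw [conjDiagonal_apply, conjStarAlgAut_apply, star_eq_conjTranspose, conjTranspose_permMatrix]
    simp only [Equiv.Perm.permMatrix, PEquiv.toMatrix_toPEquiv_mul, PEquiv.mul_toMatrix_toPEquiv]
    refine (submatrix_diagonal_equiv _ τ⁻¹).trans ?_
    simp [Function.comp_def]
  rw [← conjStarAlgAut_conjDiagonal, h, conjDiagonal_apply]

lemma trace_conjStarAlgAut (U : unitaryGroup n 𝕜) (A : Matrix n n 𝕜) :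
    (conjStarAlgAut 𝕜 _ U A).trace = A.trace := by
  rw [conjStarAlgAut_apply, trace_mul_comm, ← mul_assoc, coe_star_mul_self, one_mul]

lemma re_trace_conjDiagonal (U : unitaryGroup n 𝕜) (f : n → ℝ) :
    RCLike.re (conjDiagonal U f).trace = ∑ i, f i := by
  rw [conjDiagonal_apply, trace_conjStarAlgAut, trace_diagonal]
  simp

lemma conjDiagonal_apply_self (U : unitaryGroup n 𝕜) (v : n → ℝ) (i : n) :
    conjDiagonal U v i i = RCLike.ofReal ((unistochastic U *ᵥ v) i) := by
  rw [conjDiagonal_apply, conjStarAlgAut_apply, mul_apply, mulVec, dotProduct, RCLike.ofReal_sum]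
  refine Finset.sum_congr rfl fun j _ => ?_
  simp only [mul_diagonal, unistochastic, of_apply, star_apply, Function.comp_apply, map_mul,
    map_pow, RCLike.algebraMap_eq_ofReal, ← RCLike.mul_conj, RCLike.star_def]
  exact mul_right_comm ..

lemma re_trace_conjDiagonal_mul (U V : unitaryGroup n 𝕜) (f g : n → ℝ) :
    RCLike.re (conjDiagonal U f * conjDiagonal V g).trace =
      f ⬝ᵥ unistochastic (star U * V) *ᵥ g := by
  have h : conjDiagonal U f * conjDiagonal V g = conjStarAlgAut 𝕜 _ U
      (diagonal (RCLike.ofReal ∘ f) * conjDiagonal (star U * V) g) := by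
    rw [map_mul, conjStarAlgAut_conjDiagonal, ← conjDiagonal_apply]
    rw [Unitary.star_eq_inv, mul_inv_cancel_left]
  rw [h, trace_conjStarAlgAut]
  simp [trace, diagonal_mul, conjDiagonal_apply_self, dotProduct]

lemma re_trace_conjDiagonal_mul_le (U V : unitaryGroup n 𝕜) {f g : n → ℝ} (hfg : Monovary f g) :
    RCLike.re (conjDiagonal U f * conjDiagonal V g).trace ≤ f ⬝ᵥ g := by
  rw [re_trace_conjDiagonal_mul]
  exact dotProduct_mulVec_le_of_mem_doublyStochastic (unistochastic_mem_doublyStochastic _) hfg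

lemma re_trace_conjDiagonal_sub (U V : unitaryGroup n 𝕜) (f g : n → ℝ) :
    RCLike.re (conjDiagonal V g - conjDiagonal U f).trace =
      ∑ i, ∑ j, unistochastic (star U * V) i j * (g j - f i) := by
  have h : conjDiagonal V g - conjDiagonal U f =
      conjDiagonal U 1 * conjDiagonal V g - conjDiagonal U f * conjDiagonal V 1 := by
    rw [map_one, map_one, one_mul, mul_one]
  rw [h, trace_sub, map_sub, re_trace_conjDiagonal_mul, re_trace_conjDiagonal_mul]
  simp only [dotProduct, mulVec, Finset.mul_sum, ← Finset.sum_sub_distrib, Pi.one_apply]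
  exact Finset.sum_congr rfl fun i _ => Finset.sum_congr rfl fun j _ => by ring

lemma re_trace_conjDiagonal_mul_sub (U V : unitaryGroup n 𝕜) (g m k : n → ℝ) :
    RCLike.re (conjDiagonal U g * (conjDiagonal V k - conjDiagonal U m)).trace =
      ∑ i, ∑ j, unistochastic (star U * V) i j * (g i * (k j - m i)) := by
  have h : conjDiagonal U g * (conjDiagonal V k - conjDiagonal U m) =
      conjDiagonal U g * conjDiagonal V k - conjDiagonal U (g * m) * conjDiagonal V 1 := by
    rw [map_one, mul_one, map_mul, mul_sub]
  rw [h, trace_sub, map_sub, re_trace_conjDiagonal_mul, re_trace_conjDiagonal_mul]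
  simp only [dotProduct, mulVec, Finset.mul_sum, ← Finset.sum_sub_distrib, Pi.mul_apply,
    Pi.one_apply]
  exact Finset.sum_congr rfl fun i _ => Finset.sum_congr rfl fun j _ => by ring

lemma re_trace_conjDiagonal_sub_sq (U V : unitaryGroup n 𝕜) (m k : n → ℝ) :
    RCLike.re ((conjDiagonal V k - conjDiagonal U m) ^ 2).trace =
      ∑ i, ∑ j, unistochastic (star U * V) i j * (k j - m i) ^ 2 := by
  have h : ((conjDiagonal V k - conjDiagonal U m) ^ 2).trace =
      (conjDiagonal V (k ^ 2) - conjDiagonal U (m ^ 2)).trace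
        - 2 • (conjDiagonal U m * (conjDiagonal V k - conjDiagonal U m)).trace := by
    simp only [sq, map_mul, sub_mul, mul_sub, trace_sub, trace_mul_comm (conjDiagonal V k)]
    module
  rw [h, map_sub, map_nsmul, re_trace_conjDiagonal_sub, re_trace_conjDiagonal_mul_sub]
  simp only [Finset.smul_sum, ← Finset.sum_sub_distrib, Pi.pow_apply]
  exact Finset.sum_congr rfl fun i _ => Finset.sum_congr rfl fun j _ => by
    rw [nsmul_eq_mul]; push_cast; ring

lemma re_trace_cfc_add_sub_le {M N : Matrix n n 𝕜} (hM : M.IsHermitian) (hN : N.IsHermitian)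
    {f f' : ℝ → ℝ} {c : ℝ}
    (hf : ∀ x ∈ spectrum ℝ M, ∀ y ∈ spectrum ℝ N, f x + f' x * (y - x) - c * (y - x) ^ 2 ≤ f y) :
    RCLike.re (cfc f M).trace + RCLike.re (cfc f' M * (N - M)).trace
        - c * RCLike.re ((N - M) ^ 2).trace ≤ RCLike.re (cfc f N).trace := by
  obtain ⟨U, m, rfl⟩ : ∃ U m, M = conjDiagonal U m := ⟨_, _, (conjDiagonal_eigenvalues hM).symm⟩
  obtain ⟨V, k, rfl⟩ : ∃ V k, N = conjDiagonal V k := ⟨_, _, (conjDiagonal_eigenvalues hN).symm⟩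
  simp only [spectrum_conjDiagonal, Set.forall_mem_range] at hf
  simp only [cfc_conjDiagonal]
  suffices 0 ≤ RCLike.re (conjDiagonal V (f ∘ k) - conjDiagonal U (f ∘ m)).trace
      - RCLike.re (conjDiagonal U (f' ∘ m) * (conjDiagonal V k - conjDiagonal U m)).trace
      + c * RCLike.re ((conjDiagonal V k - conjDiagonal U m) ^ 2).trace by
    rw [trace_sub, map_sub] at this
    linarith
  rw [re_trace_conjDiagonal_sub, re_trace_conjDiagonal_mul_sub, re_trace_conjDiagonal_sub_sq]
  simp only [Finset.mul_sum, ← Finset.sum_add_distrib, ← Finset.sum_sub_distrib]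
  refine Finset.sum_nonneg fun i _ => Finset.sum_nonneg fun j _ => ?_
  have hP := nonneg_of_mem_doublyStochastic (unistochastic_mem_doublyStochastic (star U * V))
    (i := i) (j := j)
  calc 0 ≤ unistochastic (star U * V) i j *
        (f (k j) - (f (m i) + f' (m i) * (k j - m i) - c * (k j - m i) ^ 2)) :=
        mul_nonneg hP (sub_nonneg.2 (hf i j))
    _ = _ := by simp only [Function.comp_apply]; ring

variable (n 𝕜) in
lemma isCompact_unitaryGroup :
    IsCompact (unitaryGroup n 𝕜 : Set (Matrix n n 𝕜)) := by
  have hbox : IsCompact (Set.univ.pi fun _ : n => Set.univ.pi fun _ : n =>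
      Metric.closedBall (0 : 𝕜) 1) :=
    isCompact_univ_pi fun _ => isCompact_univ_pi fun _ => isCompact_closedBall _ _
  refine IsCompact.of_isClosed_subset (X := Matrix n n 𝕜) hbox isClosed_unitary
    fun U hU i _ j _ => ?_
  simpa using entry_norm_bound_of_unitary hU i j

end UnitaryConjugation

section CommutingPowers

variable {A : Type*} [NormedRing A] [StarRing A] [NormedAlgebra ℝ A]
  [PartialOrder A] [StarOrderedRing A] [NonnegSpectrumClass ℝ A]
  [ContinuousFunctionalCalculus ℝ A IsSelfAdjoint] {a b : A}

lemma commute_of_commute_rpow (ha : IsStrictlyPositive a) {x : ℝ} (hx : x ≠ 0)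
    (h : Commute (a ^ x) b) : Commute a b := by
  rw [← CFC.rpow_rpow_inv a x hx ha]
  exact h.cfc_nnreal _

lemma commute_of_commute_sq (ha : IsStrictlyPositive a) (h : Commute (a ^ 2) b) : Commute a b :=
  commute_of_commute_rpow ha two_ne_zero <| by
    rwa [← CFC.rpow_natCast a 2 ha.nonneg] at h

lemma rpow_exp (ha : IsSelfAdjoint a) (x : ℝ) :
    NormedSpace.exp a ^ x = NormedSpace.exp (x • a) := by
  have hxa : cfc (x * ·) a = x • a := cfc_const_mul_id x a
  calc NormedSpace.exp a ^ x = cfc (fun t => t ^ x) (cfc Real.exp a) := by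
        rw [CFC.rpow_eq_cfc_real ha.exp_nonneg, CFC.real_exp_eq_normedSpace_exp ha]
    _ = cfc (fun t => Real.exp t ^ x) a := by
        refine (cfc_comp' (fun t => t ^ x) Real.exp a ?_).symm
        rintro _ ⟨t, -, rfl⟩
        exact (Real.continuousAt_rpow_const _ _ (.inl (Real.exp_ne_zero t))).continuousWithinAt
    _ = cfc Real.exp (cfc (x * ·) a) := by
        rw [← cfc_comp' Real.exp (x * ·) a]
        simp only [← Real.exp_mul, mul_comm x]
    _ = NormedSpace.exp (x • a) := by
        rw [CFC.real_exp_eq_normedSpace_exp (cfc_predicate _ a), hxa]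

lemma rpow_eq_exp_smul_log (ha : IsStrictlyPositive a) (x : ℝ) :
    a ^ x = NormedSpace.exp (x • CFC.log a) := by
  rw [← rpow_exp .log, CFC.exp_log a]

lemma mul_rpow_of_commute [CompleteSpace A] (ha : IsStrictlyPositive a) (hb : IsStrictlyPositive b)
    (hab : Commute a b) (x : ℝ) : (a * b) ^ x = a ^ x * b ^ x := by
  let : NormedAlgebra ℚ A := .restrictScalars ℚ ℝ A
  have hlog : Commute (CFC.log a) (CFC.log b) := ((hab.cfc_real _).symm.cfc_real _).symm
  have hself : IsSelfAdjoint (CFC.log a + CFC.log b) := .add .log .log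
  calc (a * b) ^ x = NormedSpace.exp (CFC.log a + CFC.log b) ^ x := by
        rw [NormedSpace.exp_add_of_commute hlog, CFC.exp_log a, CFC.exp_log b]
    _ = NormedSpace.exp (x • CFC.log a + x • CFC.log b) := by rw [rpow_exp hself, smul_add]
    _ = a ^ x * b ^ x := by
        rw [NormedSpace.exp_add_of_commute ((hlog.smul_left x).smul_right x),
          rpow_eq_exp_smul_log ha, rpow_eq_exp_smul_log hb]

lemma mul_mul_self_rpow_of_commute [CompleteSpace A] (ha : IsStrictlyPositive a)
    (hb : IsStrictlyPositive b) (hab : Commute a b) (x : ℝ) :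
    (a * b * a) ^ x = (a * a) ^ x * b ^ x := by
  have haa : IsStrictlyPositive (a * a) :=
    ⟨ha.isSelfAdjoint.mul_self_nonneg, ha.isUnit.mul ha.isUnit⟩
  rw [hab.eq, mul_assoc, ← (hab.mul_left hab).eq]
  exact mul_rpow_of_commute haa hb (hab.mul_left hab) x

end CommutingPowers


section QuadraticSupport

lemma one_add_mul_sub_sq_le_rpow {z t : ℝ} (hz : 0 ≤ z) (ht : 0 < t) :
    1 + z * (t - 1) - |1 - z| * (t - 1) ^ 2 ≤ t ^ z := by
  rcases le_total 1 z with hz1 | hz1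
  · have bernoulli := one_add_mul_self_le_rpow_one_add (by linarith : -1 ≤ t - 1) hz1
    rw [add_sub_cancel] at bernoulli
    linarith [mul_nonneg (abs_nonneg (1 - z)) (sq_nonneg (t - 1))]
  · have bernoulli := rpow_one_add_le_one_add_mul_self (by linarith : -1 ≤ t - 1)
      (by linarith : 0 ≤ 1 - z) (by linarith)
    rw [add_sub_cancel] at bernoulli
    set y := (1 - z) * (t - 1)
    have hy_pos : 0 < 1 + y := (Real.rpow_pos_of_pos ht _).trans_le bernoulli
    calc 1 + z * (t - 1) - |1 - z| * (t - 1) ^ 2 = t * (1 - y) := by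
          rw [abs_of_nonneg (by linarith)]; ring
      _ ≤ t ^ z := le_of_mul_le_mul_right ?_ hy_pos
    calc t * (1 - y) * (1 + y) ≤ t := by linarith [mul_nonneg ht.le (sq_nonneg y)]
      _ = t ^ z * t ^ (1 - z) := by rw [← Real.rpow_add ht, add_sub_cancel, Real.rpow_one]
      _ ≤ t ^ z * (1 + y) := by gcongr

lemma rpow_add_mul_sub_sq_le_rpow {x y z : ℝ} (hx : 0 < x) (hy : 0 < y) (hz : 0 ≤ z) :
    x ^ z + z * x ^ (z - 1) * (y - x) - |1 - z| * x ^ (z - 2) * (y - x) ^ 2 ≤ y ^ z := by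
  have h := mul_le_mul_of_nonneg_left (one_add_mul_sub_sq_le_rpow hz (div_pos hy hx))
    (Real.rpow_nonneg hx.le z)
  rw [← Real.mul_rpow hx.le (div_pos hy hx).le, mul_div_cancel₀ _ hx.ne'] at h
  refine le_trans (le_of_eq ?_) h
  rw [Real.rpow_sub hx, Real.rpow_sub hx, Real.rpow_one, Real.rpow_two]
  field_simp

end QuadraticSupport

section Stationarity

variable {n : Type*} [Fintype n]

lemma hasDerivAt_re_trace {N : ℝ → Matrix n n ℂ} {D : Matrix n n ℂ} {t₀ : ℝ}
    (hN : HasDerivAt N D t₀) : HasDerivAt (fun t => (N t).trace.re) D.trace.re t₀ := by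
  classical
  let ℓ := LinearMap.toContinuousLinearMap (Complex.reLm ∘ₗ traceLinearMap n ℝ ℂ)
  exact ℓ.hasFDerivAt.comp_hasDerivAt t₀ hN

variable [DecidableEq n]

lemma re_trace_cfc_mul_eq_zero_of_isLocalMax {N : ℝ → Matrix n n ℂ} {D : Matrix n n ℂ} {t₀ : ℝ}
    (hN : ∀ t, (N t).IsHermitian) (hD : HasDerivAt N D t₀) {f f' : ℝ → ℝ} {c : ℝ}
    (hf : ∀ t, ∀ x ∈ spectrum ℝ (N t₀), ∀ y ∈ spectrum ℝ (N t),
      f x + f' x * (y - x) - c * (y - x) ^ 2 ≤ f y)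
    (hmax : IsLocalMax (fun t => (cfc f (N t)).trace.re) t₀) :
    (cfc f' (N t₀) * D).trace.re = 0 := by
  have hsub : HasDerivAt (fun t => N t - N t₀) D t₀ := hD.sub_const _
  have hsq : HasDerivAt (fun t => (N t - N t₀) ^ 2) 0 t₀ := by
    convert! hsub.mul hsub using 1
    · exact funext fun t => sq _
    · simp
  have hminorant : HasDerivAt (fun t => (cfc f (N t₀)).trace.re
      + (cfc f' (N t₀) * (N t - N t₀)).trace.re - c * ((N t - N t₀) ^ 2).trace.re)
      (cfc f' (N t₀) * D).trace.re t₀ := by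
    convert! ((hasDerivAt_re_trace (hsub.const_mul (cfc f' (N t₀)))).const_add
      (cfc f (N t₀)).trace.re).sub ((hasDerivAt_re_trace hsq).const_mul c) using 1
    simp
  refine IsLocalMax.hasDerivAt_eq_zero ?_ hminorant
  filter_upwards [hmax] with t ht
  refine (re_trace_cfc_add_sub_le (hN t₀) (hN t) (hf t)).trans (ht.trans_eq ?_)
  simp

lemma re_trace_rpow_mul_eq_zero_of_isLocalMax {N : ℝ → Matrix n n ℂ} {D : Matrix n n ℂ} {t₀ : ℝ}
    (hN : ∀ t, (N t).PosDef) (hD : HasDerivAt N D t₀) {z : ℝ} (hz : 0 < z)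
    (hmax : IsLocalMax (fun t => (N t ^ z).trace.re) t₀) :
    (N t₀ ^ (z - 1) * D).trace.re = 0 := by
  have hrpow : ∀ (x t : ℝ), N t ^ x = cfc (· ^ x : ℝ → ℝ) (N t) := fun x t =>
    CFC.rpow_eq_cfc_real (hN t).isStrictlyPositive.nonneg
  obtain ⟨c, hc⟩ := ((finite_real_spectrum (A := N t₀)).image
    fun x => |1 - z| * x ^ (z - 2)).bddAbove
  have hsupport : ∀ t, ∀ x ∈ spectrum ℝ (N t₀), ∀ y ∈ spectrum ℝ (N t),
      x ^ z + z * x ^ (z - 1) * (y - x) - c * (y - x) ^ 2 ≤ y ^ z := by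
    intro t x hx y hy
    have hx_pos : 0 < x := (hN t₀).isStrictlyPositive.spectrum_pos hx
    have hy_pos : 0 < y := (hN t).isStrictlyPositive.spectrum_pos hy
    refine le_trans ?_ (rpow_add_mul_sub_sq_le_rpow hx_pos hy_pos hz.le)
    gcongr
    exact hc ⟨x, hx, rfl⟩
  simp only [hrpow z] at hmax
  have h := re_trace_cfc_mul_eq_zero_of_isLocalMax (fun t => (hN t).isHermitian) hD hsupport hmax
  rw [cfc_const_mul z (fun x => x ^ (z - 1)) _ (finite_real_spectrum.continuousOn _), ← hrpow,
    smul_mul_assoc, trace_smul, Complex.smul_re, smul_eq_mul] at h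
  exact (mul_eq_zero.1 h).resolve_left hz.ne'

end Stationarity

section Commutation

variable {n : Type*} [Fintype n] [DecidableEq n] {S X : Matrix n n ℂ} {z : ℝ}

/-- `Tr (S X S) ^ z`, the functional of `X` to be maximized over a unitary orbit. -/
noncomputable def sandwichTrace (z : ℝ) (S X : Matrix n n ℂ) : ℝ :=
  ((S * X * S) ^ z).trace.re

lemma sandwichTrace_nonneg (z : ℝ) (S X : Matrix n n ℂ) : 0 ≤ sandwichTrace z S X :=
  (Complex.nonneg_iff.1 CFC.rpow_nonneg.posSemidef.trace_nonneg).1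

lemma hasDerivAt_conj_exp_smul {K : Matrix n n ℂ} (hK : star K = -K) (X : Matrix n n ℂ) :
    HasDerivAt (fun t : ℝ => NormedSpace.exp (t • K) * X * star (NormedSpace.exp (t • K)))
      (K * X - X * K) 0 := by
  have hexp : HasDerivAt (fun t : ℝ => NormedSpace.exp (t • K)) K 0 := by
    simpa using hasDerivAt_exp_smul_const (𝕂 := ℝ) K 0
  convert! (hexp.mul_const X).mul hexp.star using 1
  simp [hK, sub_eq_add_neg]

lemma re_trace_rpow_mul_commutator_eq_zero (hS : S.PosDef) (hX : X.PosDef)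
    (hz : 0 < z) (hmax : ∀ W : unitaryGroup n ℂ,
      sandwichTrace z S (conjStarAlgAut ℂ _ W X) ≤ sandwichTrace z S X)
    {K : Matrix n n ℂ} (hK : star K = -K) :
    ((S * X * S) ^ (z - 1) * (S * (K * X - X * K) * S)).trace.re = 0 := by
  let : NormedAlgebra ℚ (Matrix n n ℂ) := .restrictScalars ℚ ℝ _
  have hskew (t : ℝ) : t • K ∈ skewAdjoint (Matrix n n ℂ) := by
    rw [skewAdjoint.mem_iff, star_smul, hK, star_trivial, smul_neg]
  let W (t : ℝ) : unitaryGroup n ℂ := ⟨_, NormedSpace.exp_mem_unitary_of_mem_skewAdjoint (hskew t)⟩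
  let N (t : ℝ) : Matrix n n ℂ := S * conjStarAlgAut ℂ _ (W t) X * S
  have hN₀ : N 0 = S * X * S := by simp [N, W, conjStarAlgAut_apply]
  have hN (t : ℝ) : (N t).PosDef := posDef_mul_mul_self hS (posDef_conjStarAlgAut _ hX)
  have hD : HasDerivAt N (S * (K * X - X * K) * S) 0 :=
    ((hasDerivAt_conj_exp_smul hK X).const_mul S).mul_const S
  simp only [sandwichTrace, ← hN₀] at hmax ⊢
  exact re_trace_rpow_mul_eq_zero_of_isLocalMax hN hD hz (.of_forall fun t => hmax (W t))

lemma commute_mul_rpow_mul (hS : S.PosDef) (hX : X.PosDef)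
    (hz : 0 < z) (hmax : ∀ W : unitaryGroup n ℂ,
      sandwichTrace z S (conjStarAlgAut ℂ _ W X) ≤ sandwichTrace z S X) :
    Commute X (S * (S * X * S) ^ (z - 1) * S) := by
  set R := (S * X * S) ^ (z - 1)
  have hS_star : star S = S := hS.isHermitian
  have hX_star : star X = X := hX.isHermitian
  have hR_star : star R = R := (CFC.rpow_nonneg (a := S * X * S)).isSelfAdjoint
  set K := X * (S * R * S) - S * R * S * X with hK
  have hK_star : star K = -K := by
    simp only [hK, star_sub, star_mul, hS_star, hX_star, hR_star, mul_assoc, neg_sub]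
  have htrace : (R * (S * (K * X - X * K) * S)).trace = (K * K).trace := by
    calc (R * (S * (K * X - X * K) * S)).trace
        = (S * R * S * (K * X)).trace - (S * R * S * X * K).trace := by
          rw [← trace_sub, mul_assoc _ X, ← mul_sub, ← mul_assoc, trace_mul_comm]
          simp only [mul_assoc]
      _ = (X * (S * R * S) * K).trace - (S * R * S * X * K).trace := by
          rw [← mul_assoc, trace_mul_comm, ← mul_assoc]
      _ = (K * K).trace := by rw [← trace_sub, ← sub_mul]
  refine sub_eq_zero.1 (eq_zero_of_re_trace_mul_self_eq_zero hK_star ?_)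
  rw [← htrace]
  exact re_trace_rpow_mul_commutator_eq_zero hS hX hz hmax hK_star

lemma commute_of_forall_sandwichTrace_le (hS : S.PosDef) (hX : X.PosDef)
    (hz : 0 < z) (hmax : ∀ W : unitaryGroup n ℂ,
      sandwichTrace z S (conjStarAlgAut ℂ _ W X) ≤ sandwichTrace z S X) :
    Commute S X := by
  have hG := (commute_mul_rpow_mul hS hX hz hmax).eq
  set M := S * X * S with hM
  have hM_pos : IsStrictlyPositive M := (posDef_mul_mul_self hS hX).isStrictlyPositive
  have hrpow : M ^ z = M ^ (z - 1) * M := by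
    nth_rw 3 [← CFC.rpow_one M]
    rw [← CFC.rpow_add hM_pos.isUnit, sub_add_cancel]
  have hrpow' : M ^ z = M * M ^ (z - 1) := by
    nth_rw 2 [← CFC.rpow_one M]
    rw [← CFC.rpow_add hM_pos.isUnit, add_sub_cancel]
  have hsq : Commute (S ^ 2) (M ^ z) := by
    calc S ^ 2 * M ^ z = S * (S * M ^ (z - 1) * S * X) * S := by
          rw [hrpow, hM, sq]; simp only [mul_assoc]
      _ = S * (X * (S * M ^ (z - 1) * S)) * S := by rw [hG]
      _ = M ^ z * S ^ 2 := by rw [hrpow', hM, sq]; simp only [mul_assoc]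
  have hSM : Commute M S := commute_of_commute_rpow hM_pos hz.ne'
    (commute_of_commute_sq hS.isStrictlyPositive hsq).symm
  refine hS.isUnit.mul_left_cancel (hS.isUnit.mul_right_cancel ?_)
  simpa only [hM, mul_assoc] using hSM.eq.symm

lemma continuous_rpow_of_posSemidef {E : Type*} [TopologicalSpace E] {N : E → Matrix n n ℂ}
    (hN : Continuous N) (hN_nonneg : ∀ t, (N t).PosSemidef) (hz : 0 ≤ z) :
    Continuous fun t => N t ^ z := by
  simp only [CFC.rpow_eq_cfc_real (hN_nonneg _).nonneg]
  exact hN.cfc_of_mem_nhdsSet (s := Set.univ) (p := IsSelfAdjoint) _ Filter.univ_mem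
    (fun t => (hN_nonneg t).isHermitian) (Real.continuous_rpow_const hz).continuousOn

lemma exists_forall_sandwichTrace_le (hS : S.IsHermitian)
    (hX : X.PosSemidef) (hz : 0 ≤ z) :
    ∃ U : unitaryGroup n ℂ, ∀ W : unitaryGroup n ℂ,
      sandwichTrace z S (conjStarAlgAut ℂ _ W X) ≤ sandwichTrace z S (conjStarAlgAut ℂ _ U X) := by
  have hN : Continuous fun W : Matrix n n ℂ => S * (W * X * star W) * S :=
    (continuous_const.mul ((continuous_id.mul continuous_const).mul continuous_star)).mul
      continuous_const
  have hN_nonneg (W : Matrix n n ℂ) : (S * (W * X * star W) * S).PosSemidef := by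
    simpa only [hS.eq, star_eq_conjTranspose] using
      (hX.mul_mul_conjTranspose_same W).mul_mul_conjTranspose_same S
  have hcont := Complex.continuous_re.comp
    (continuous_rpow_of_posSemidef hN hN_nonneg hz).matrix_trace
  obtain ⟨U, hU, hmax⟩ := (isCompact_unitaryGroup n ℂ).exists_isMaxOn
    ⟨1, one_mem (unitaryGroup n ℂ)⟩ hcont.continuousOn
  exact ⟨⟨U, hU⟩, fun W => hmax W.2⟩

lemma exists_commute_forall_sandwichTrace_le (hS : S.PosDef) (hX : X.PosDef)
    (hz : 0 < z) :
    ∃ U : unitaryGroup n ℂ, Commute S (conjStarAlgAut ℂ _ U X) ∧ ∀ W : unitaryGroup n ℂ,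
      sandwichTrace z S (conjStarAlgAut ℂ _ W X) ≤ sandwichTrace z S (conjStarAlgAut ℂ _ U X) := by
  obtain ⟨U, hU⟩ := exists_forall_sandwichTrace_le hS.isHermitian hX.posSemidef hz.le
  refine ⟨U, commute_of_forall_sandwichTrace_le hS (posDef_conjStarAlgAut U hX) hz fun W => ?_, hU⟩
  rw [← conjStarAlgAut_mul_apply]
  exact hU (W * U)

theorem isGreatest_sandwichTrace_conjDiagonal (U V : unitaryGroup n ℂ) {s a : n → ℝ}
    (hs : ∀ i, 0 < s i) (ha : ∀ i, 0 < a i) (hsa : Monovary s a) (hz : 0 < z) :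
    IsGreatest (Set.range fun W : unitaryGroup n ℂ =>
        sandwichTrace z (conjDiagonal U s) (conjStarAlgAut ℂ _ W (conjDiagonal V a)))
      (∑ i, (s i * a i * s i) ^ z) := by
  constructor
  · refine ⟨U * star V, ?_⟩
    have hnonneg : 0 ≤ s * a * s := fun i => (mul_pos (mul_pos (hs i) (ha i)) (hs i)).le
    simp only [sandwichTrace, conjStarAlgAut_conjDiagonal, mul_assoc U, Unitary.star_mul_self,
      mul_one]
    rw [← map_mul, ← map_mul, rpow_conjDiagonal U hnonneg]
    exact re_trace_conjDiagonal U _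
  rintro _ ⟨W, rfl⟩
  obtain ⟨Y, hcomm, hmax⟩ :=
    exists_commute_forall_sandwichTrace_le (posDef_conjDiagonal U hs) (posDef_conjDiagonal V ha) hz
  have hss : 0 ≤ s * s := fun i => mul_self_nonneg (s i)
  have hmono : Monovary (fun i => (s i * s i) ^ z) (fun i => a i ^ z) := fun i j hij => by
    have hij' : s i ≤ s j := hsa ((Real.rpow_lt_rpow_iff (ha i).le (ha j).le hz).1 hij)
    exact Real.rpow_le_rpow (mul_self_nonneg _)
      (mul_self_le_mul_self (hs i).le hij') hz.le
  refine (hmax W).trans ?_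
  have hS_pos := (posDef_conjDiagonal U hs).isStrictlyPositive
  have hX_pos := (posDef_conjStarAlgAut Y (posDef_conjDiagonal V ha)).isStrictlyPositive
  rw [sandwichTrace, mul_mul_self_rpow_of_commute hS_pos hX_pos hcomm, conjStarAlgAut_conjDiagonal,
    ← map_mul, rpow_conjDiagonal U hss, rpow_conjDiagonal _ fun i => (ha i).le]
  refine (re_trace_conjDiagonal_mul_le U _ hmono).trans_eq (Finset.sum_congr rfl fun i _ => ?_)
  rw [← Real.mul_rpow (mul_self_nonneg _) (ha i).le, mul_right_comm]

end Commutation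

section Fidelity

variable {d : ℕ} {ρ σ : Matrix (Fin d) (Fin d) ℂ} {α z : ℝ}

lemma mpow_eq_rpow {A : Matrix (Fin d) (Fin d) ℂ} (hA : A.PosSemidef) (t : ℝ) :
    mpow A t = A ^ t := by
  conv_rhs => rw [← conjDiagonal_eigenvalues hA.isHermitian,
    rpow_conjDiagonal _ hA.eigenvalues_nonneg, conjDiagonal_apply, conjStarAlgAut_apply]
  exact dif_pos hA.isHermitian

lemma Faz_conj (hρ : ρ.PosDef) (hσ : σ.PosDef) (U : unitaryGroup (Fin d) ℂ) (α z : ℝ) :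
    Faz ρ (U * σ * star (U : Matrix (Fin d) (Fin d) ℂ)) α z =
      sandwichTrace z (σ ^ ((1 - α) / (2 * z))) (conjStarAlgAut ℂ _ (star U) (ρ ^ (α / z)))
        ^ (1 / α) := by
  have hρ_pow : (ρ ^ (α / z)).PosDef := (hρ.isStrictlyPositive.rpow ρ _).posDef
  have hσ_pow : (σ ^ ((1 - α) / (2 * z))).PosDef := (hσ.isStrictlyPositive.rpow σ _).posDef
  have hconj : conjStarAlgAut ℂ _ U (σ ^ ((1 - α) / (2 * z))) * ρ ^ (α / z) *
      conjStarAlgAut ℂ _ U (σ ^ ((1 - α) / (2 * z))) =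
      conjStarAlgAut ℂ _ U (σ ^ ((1 - α) / (2 * z)) *
        conjStarAlgAut ℂ _ (star U) (ρ ^ (α / z)) * σ ^ ((1 - α) / (2 * z))) := by
    simp only [map_mul, ← conjStarAlgAut_mul_apply, Unitary.mul_star_self, map_one,
      StarAlgEquiv.one_apply]
  have hpos := posDef_mul_mul_self hσ_pow (posDef_conjStarAlgAut (star U) hρ_pow)
  rw [← conjStarAlgAut_apply (S := ℂ), Faz, mpow_eq_rpow (posDef_conjStarAlgAut U hσ).posSemidef,
    mpow_eq_rpow hρ.posSemidef, conjStarAlgAut_rpow U hσ.posSemidef, hconj,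
    mpow_eq_rpow (posDef_conjStarAlgAut U hpos).posSemidef, conjStarAlgAut_rpow U hpos.posSemidef,
    trace_conjStarAlgAut, sandwichTrace]

lemma monotone_eigUp {A : Matrix (Fin d) (Fin d) ℂ} (hA : A.IsHermitian) : Monotone (eigUp hA) :=
  Tuple.monotone_sort _

lemma antitone_eigDown {A : Matrix (Fin d) (Fin d) ℂ} (hA : A.IsHermitian) :
    Antitone (eigDown hA) :=
  (Tuple.monotone_sort _).comp_antitone Fin.rev_anti

lemma exists_conjDiagonal_eigUp {A : Matrix (Fin d) (Fin d) ℂ} (hA : A.IsHermitian) :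
    ∃ U : unitaryGroup (Fin d) ℂ, conjDiagonal U (eigUp hA) = A := by
  obtain ⟨U, hU⟩ := exists_conjDiagonal_comp_eq hA.eigenvectorUnitary (Tuple.sort hA.eigenvalues)
  exact ⟨U, (hU _).trans (conjDiagonal_eigenvalues hA)⟩

lemma exists_conjDiagonal_eigDown {A : Matrix (Fin d) (Fin d) ℂ} (hA : A.IsHermitian) :
    ∃ U : unitaryGroup (Fin d) ℂ, conjDiagonal U (eigDown hA) = A := by
  obtain ⟨U, hU⟩ := exists_conjDiagonal_eigUp hA
  obtain ⟨V, hV⟩ := exists_conjDiagonal_comp_eq U Fin.revPerm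
  exact ⟨V, (hV _).trans hU⟩

lemma rpow_mul_rpow_mul_rpow_rpow {s r : ℝ} (hs : 0 < s) (hr : 0 < r) (hz : z ≠ 0) (α : ℝ) :
    (s ^ ((1 - α) / (2 * z)) * r ^ (α / z) * s ^ ((1 - α) / (2 * z))) ^ z =
      r ^ α * s ^ (1 - α) := by
  rw [mul_right_comm, ← Real.rpow_add hs,
    Real.mul_rpow (Real.rpow_nonneg hs.le _) (Real.rpow_nonneg hr.le _),
    ← Real.rpow_mul hs.le, ← Real.rpow_mul hr.le, mul_comm]
  congr 2 <;> field_simp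
  ring

lemma isGreatest_sandwichTrace_rpow (hρ : ρ.PosDef) (hσ : σ.PosDef) (hα : 1 ≤ α) (hz : 0 < z) :
    IsGreatest (Set.range fun W : unitaryGroup (Fin d) ℂ =>
        sandwichTrace z (σ ^ ((1 - α) / (2 * z))) (conjStarAlgAut ℂ _ W (ρ ^ (α / z))))
      (∑ i, eigDown hρ.1 i ^ α * eigUp hσ.1 i ^ (1 - α)) := by
  obtain ⟨U, hU⟩ := exists_conjDiagonal_eigUp hσ.1
  obtain ⟨V, hV⟩ := exists_conjDiagonal_eigDown hρ.1
  have hr : ∀ i, 0 < eigDown hρ.1 i := fun i => hρ.eigenvalues_pos _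
  have hs : ∀ i, 0 < eigUp hσ.1 i := fun i => hσ.eigenvalues_pos _
  set r := eigDown hρ.1
  set s := eigUp hσ.1
  have hs_anti : Antitone fun i => s i ^ ((1 - α) / (2 * z)) := fun i j hij =>
    Real.rpow_le_rpow_of_nonpos (hs i) (monotone_eigUp hσ.1 hij)
      (div_nonpos_of_nonpos_of_nonneg (by linarith) (by linarith))
  have hr_anti : Antitone fun i => r i ^ (α / z) := fun i j hij =>
    Real.rpow_le_rpow (hr j).le (antitone_eigDown hρ.1 hij) (by positivity)
  simp only [← rpow_mul_rpow_mul_rpow_rpow (hs _) (hr _) hz.ne' α]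
  rw [← hU, ← hV, rpow_conjDiagonal U fun i => (hs i).le, rpow_conjDiagonal V fun i => (hr i).le]
  exact isGreatest_sandwichTrace_conjDiagonal U V (fun i => Real.rpow_pos_of_pos (hs i) _)
    (fun i => Real.rpow_pos_of_pos (hr i) _) (hs_anti.monovary hr_anti) hz

lemma setOf_Faz_conj_eq_image (hρ : ρ.PosDef) (hσ : σ.PosDef) (α z : ℝ) :
    {x : ℝ | ∃ U ∈ unitaryGroup (Fin d) ℂ, x = Faz ρ (U * σ * star U) α z} =
      (· ^ (1 / α)) '' Set.range fun W : unitaryGroup (Fin d) ℂ =>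
        sandwichTrace z (σ ^ ((1 - α) / (2 * z))) (conjStarAlgAut ℂ _ W (ρ ^ (α / z))) := by
  rw [← Set.range_comp, ← (Equiv.inv (unitaryGroup (Fin d) ℂ)).surjective.range_comp]
  ext x
  constructor
  · rintro ⟨U, hU, rfl⟩
    exact ⟨⟨U, hU⟩, (Faz_conj hρ hσ ⟨U, hU⟩ α z).symm⟩
  · rintro ⟨U, rfl⟩
    exact ⟨U, U.2, (Faz_conj hρ hσ U α z).symm⟩

theorem stmt_1_general (hρ : ρ.PosDef) (hσ : σ.PosDef) (hα : 1 ≤ α) (hz : 0 < z) :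
    IsGreatest {x : ℝ | ∃ U ∈ unitaryGroup (Fin d) ℂ, x = Faz ρ (U * σ * star U) α z}
      (FazC (eigDown hρ.1) (eigUp hσ.1) α) := by
  rw [setOf_Faz_conj_eq_image hρ hσ α z]
  refine MonotoneOn.map_isGreatest ?_ (isGreatest_sandwichTrace_rpow hρ hσ hα hz)
  refine (Real.monotoneOn_rpow_Ici_of_exponent_nonneg (by positivity)).mono ?_
  rintro _ ⟨W, rfl⟩
  exact sandwichTrace_nonneg ..

end Fidelity

end

/-- for positive definite density matrices `ρ, σ`, `α ∈ (1,∞)` and `z ∈ (0,∞)`,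
the maximum of `F_{α,z}(ρ, UσU*)` over unitaries `U` is `F_α^C(λ↓(ρ), λ↑(σ))`, attained. -/
theorem stmt_1 {d : ℕ} (ρ σ : Matrix (Fin d) (Fin d) ℂ)
    (hρ : ρ.PosDef) (hσ : σ.PosDef) (hρ1 : ρ.trace = 1) (hσ1 : σ.trace = 1)
    (α z : ℝ) (hα : 1 < α) (hz : 0 < z) :
    IsGreatest {x : ℝ | ∃ U ∈ Matrix.unitaryGroup (Fin d) ℂ,
        x = Faz ρ (U * σ * star U) α z}
      (FazC (eigDown hρ.1) (eigUp hσ.1) α) :=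
  stmt_1_general hρ hσ hα.le hz
end
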